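/- Let F, G : ℂ × ℂ → ℂ satisfy the WZ-pair relation F(n+1,k) − F(n,k) = G(n,k+1) − G(n,k) for all complex numbers n and k. Assume that for every complex number x: (i) the series ∑_{n=0}^∞ G(x+n, 0) and ∑_{n=0}^∞ F(x, n) (sums over nonnegative integers n) converge; and (ii) G(x+n, 0) → 0 and G(x, n) → 0 as the integer n → ∞. Define t(x) = ∑_{n=0}^∞ G(x+n, 0) − ∑_{n=0}^∞ F(x, n). Then t(x+1) = t(x) for every complex number x. -/

import Mathlib

open Filter Topology in
/-- The periodicity of a WZ-pair at a point, for series that are only assumed to converge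
in the sense of partial sums. -/
theorem wz_pair_sub_eq_sub_of_tendsto {F G : ℂ × ℂ → ℂ} {x a a' b b' : ℂ}
    (hWZ : ∀ k : ℂ, F (x + 1, k) - F (x, k) = G (x, k + 1) - G (x, k))
    (hG : Tendsto (fun N : ℕ => ∑ n ∈ Finset.range N, G (x + n, 0)) atTop (𝓝 a))
    (hG' : Tendsto (fun N : ℕ => ∑ n ∈ Finset.range N, G (x + 1 + n, 0)) atTop (𝓝 a'))
    (hF : Tendsto (fun N : ℕ => ∑ n ∈ Finset.range N, F (x, n)) atTop (𝓝 b))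
    (hF' : Tendsto (fun N : ℕ => ∑ n ∈ Finset.range N, F (x + 1, n)) atTop (𝓝 b'))
    (hGlim : Tendsto (fun n : ℕ => G (x, n)) atTop (𝓝 0)) :
    a' - b' = a - b := by
  have hGshift : a = a' + G (x, 0) := by
    refine tendsto_nhds_unique ((tendsto_add_atTop_iff_nat 1).2 hG) ?_
    refine (hG'.add_const (G (x, 0))).congr fun N => ?_
    rw [Finset.sum_range_succ']
    simp [add_assoc, add_comm (1 : ℂ)]
  have hFdiff : b' - b = 0 - G (x, 0) := by
    refine tendsto_nhds_unique (hF'.sub hF) ?_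
    refine (hGlim.sub_const (G (x, 0))).congr fun N => ?_
    rw [← Finset.sum_sub_distrib]
    simpa [hWZ] using (Finset.sum_range_sub (fun n : ℕ => G (x, n)) N).symm
  linear_combination -hGshift - hFdiff

/-- If `(F, G)` is a WZ-pair of complex functions whose relevant series
converge and whose `G`-values tend to zero appropriately, then
`t x = ∑' n, G (x+n, 0) - ∑' n, F (x, n)` satisfies `t (x+1) = t x`. -/
theorem wz_pair_periodic (F G : ℂ × ℂ → ℂ)
    (hWZ : ∀ n k : ℂ, F (n + 1, k) - F (n, k) = G (n, k + 1) - G (n, k))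
    (hGsum : ∀ x : ℂ, Summable (fun n : ℕ => G (x + n, 0)))
    (hFsum : ∀ x : ℂ, Summable (fun n : ℕ => F (x, n)))
    (hGlim : ∀ x : ℂ, Filter.Tendsto (fun n : ℕ => G (x + n, 0)) Filter.atTop (nhds 0))
    (hGlim' : ∀ x : ℂ, Filter.Tendsto (fun n : ℕ => G (x, n)) Filter.atTop (nhds 0))
    (t : ℂ → ℂ)
    (ht : ∀ x : ℂ, t x = (∑' n : ℕ, G (x + n, 0)) - ∑' n : ℕ, F (x, n)) :
    ∀ x : ℂ, t (x + 1) = t x := by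
  intro x
  rw [ht, ht]
  exact wz_pair_sub_eq_sub_of_tendsto (hWZ x) (hGsum x).hasSum.tendsto_sum_nat
    (hGsum (x + 1)).hasSum.tendsto_sum_nat (hFsum x).hasSum.tendsto_sum_nat
    (hFsum (x + 1)).hasSum.tendsto_sum_nat (hGlim' x)
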